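/- arXiv:1403.5509 — 6 statements merged into one kernel-verified Lean document; each statement's English description precedes it below -/
import Mathlib

section
/- Let V be a finite-dimensional complex vector space and d a natural number. The centralizer in End_ℂ(V^{⊗d}) of the subalgebra A spanned by the permutation operators of S_d equals the unital subalgebra B generated by the diagonal operators Σ_{i=1}^d a^{(i)} for a ∈ End_ℂ(V); that is, {T ∈ End_ℂ(V^{⊗d}) : T·S = S·T for all S ∈ A} = B. -/
open scoped TensorProduct

noncomputable section

/-- The permutation operator on `V^{⊗d}` induced by `σ ∈ S_d`:
`σ · (v₁ ⊗ ⋯ ⊗ v_d) = v_{σ⁻¹(1)} ⊗ ⋯ ⊗ v_{σ⁻¹(d)}`. -/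
def permOp (V : Type) [AddCommGroup V] [Module ℂ V] (d : ℕ) (σ : Equiv.Perm (Fin d)) :
    Module.End ℂ (⨂[ℂ] _ : Fin d, V) :=
  (PiTensorProduct.reindex ℂ (fun _ : Fin d => V) σ).toLinearMap

/-- The operator `a^{(i)}` acting by `a` in the `i`-th tensor factor and by the identity
elsewhere. -/
def slotOp (V : Type) [AddCommGroup V] [Module ℂ V] (d : ℕ) (i : Fin d)
    (a : Module.End ℂ V) : Module.End ℂ (⨂[ℂ] _ : Fin d, V) :=
  PiTensorProduct.map (Function.update (fun _ : Fin d => (LinearMap.id : V →ₗ[ℂ] V)) i a)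

/-- The diagonal operator `Σ_{i=1}^d a^{(i)}` on `V^{⊗d}`. -/
def diagOp (V : Type) [AddCommGroup V] [Module ℂ V] (d : ℕ) (a : Module.End ℂ V) :
    Module.End ℂ (⨂[ℂ] _ : Fin d, V) :=
  ∑ i : Fin d, slotOp V d i a

section

variable {V : Type} [AddCommGroup V] [Module ℂ V] {d : ℕ}

theorem permOp_mul_map (σ : Equiv.Perm (Fin d)) (f : Fin d → Module.End ℂ V) :
    permOp V d σ * PiTensorProduct.map f =
      PiTensorProduct.map (fun i => f (σ.symm i)) * permOp V d σ :=
  (PiTensorProduct.map_comp_reindex_eq f σ).symm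

theorem permOp_mul_permOp_inv (σ : Equiv.Perm (Fin d)) :
    permOp V d σ * permOp V d σ⁻¹ = 1 := by
  refine PiTensorProduct.ext (MultilinearMap.ext fun v => ?_)
  change PiTensorProduct.reindex ℂ (fun _ => V) σ
    (PiTensorProduct.reindex ℂ (fun _ => V) σ⁻¹ (PiTensorProduct.tprod ℂ v)) =
      PiTensorProduct.tprod ℂ v
  rw [PiTensorProduct.reindex_tprod]
  erw [PiTensorProduct.reindex_tprod]
  exact congrArg _ (funext fun i => congrArg v (by simp [Equiv.Perm.inv_def]))

theorem map_mul_slotOp (f : Fin d → Module.End ℂ V) (i : Fin d) (a : Module.End ℂ V) :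
    PiTensorProduct.map f * slotOp V d i a =
      PiTensorProduct.map (Function.update f i (f i * a)) := by
  rw [slotOp, ← PiTensorProduct.map_mul]
  congr 1
  funext j
  rcases eq_or_ne j i with rfl | h
  · simp
  · simp only [Function.update_of_ne h]
    exact mul_one (f j)

theorem permOp_mul_diagOp (σ : Equiv.Perm (Fin d)) (a : Module.End ℂ V) :
    permOp V d σ * diagOp V d a = diagOp V d a * permOp V d σ := by
  simp only [diagOp, slotOp, Finset.mul_sum, Finset.sum_mul, permOp_mul_map]
  refine Fintype.sum_equiv σ _ _ fun i => ?_
  congr 2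
  funext j
  simp [Function.update_apply, Equiv.symm_apply_eq]

/-- The symmetrization `Σ_σ f_{σ(1)} ⊗ ⋯ ⊗ f_{σ(d)}` of a pure tensor of endomorphisms. -/
def symmetrizedMap (f : Fin d → Module.End ℂ V) : Module.End ℂ (⨂[ℂ] _ : Fin d, V) :=
  ∑ σ : Equiv.Perm (Fin d), PiTensorProduct.map (fun i => f (σ i))

theorem symmetrizedMap_comp_perm (f : Fin d → Module.End ℂ V) (τ : Equiv.Perm (Fin d)) :
    symmetrizedMap (fun i => f (τ i)) = symmetrizedMap f :=
  Fintype.sum_equiv (Equiv.mulLeft τ) _ _ fun _ => rfl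

theorem symmetrizedMap_mul_diagOp (f : Fin d → Module.End ℂ V) (a : Module.End ℂ V) :
    symmetrizedMap f * diagOp V d a =
      ∑ j, symmetrizedMap (Function.update f j (f j * a)) := by
  rw [symmetrizedMap, diagOp, Finset.sum_mul_sum]
  simp only [symmetrizedMap, map_mul_slotOp]
  refine Eq.trans ?_ Finset.sum_comm
  refine Finset.sum_congr rfl fun σ _ => Fintype.sum_equiv σ _ _ fun i => ?_
  congr 1
  funext k
  simp [Function.update_apply]

theorem symmetrizedMap_update_eq {f : Fin d → Module.End ℂ V} {i j : Fin d}
    (hi : f i = 1) (hj : f j = 1) (a : Module.End ℂ V) :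
    symmetrizedMap (Function.update f i a) = symmetrizedMap (Function.update f j a) := by
  rw [← symmetrizedMap_comp_perm _ (Equiv.swap i j)]
  congr 1
  funext k
  simp only [Function.update_apply, Equiv.swap_apply_def]
  split_ifs <;> simp_all

/-- Multiplying by a diagonal operator fills one more slot of a symmetrized tensor, up to
symmetrized tensors with no further slots filled. -/
theorem symmetrizedMap_mem_adjoin_of_support (s : Finset (Fin d)) :
    ∀ f : Fin d → Module.End ℂ V, (∀ i ∉ s, f i = 1) →
      symmetrizedMap f ∈ Algebra.adjoin ℂ {S | ∃ a : Module.End ℂ V, S = diagOp V d a} := by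
  induction s using Finset.induction_on with
  | empty =>
    intro f hf
    refine sum_mem fun σ _ => ?_
    simp only [hf _ (Finset.notMem_empty _)]
    rw [PiTensorProduct.map_one]
    exact one_mem _
  | insert j s hj ih =>
    intro f hf
    set g := Function.update f j 1
    have hgs : ∀ i ∉ s, g i = 1 := by
      intro i hi
      rcases eq_or_ne i j with rfl | h
      · simp [g]
      · simp [g, h, hf i (by simp [h, hi])]
    have hfg : f = Function.update g j (f j) := by simp [g]
    have key := symmetrizedMap_mul_diagOp g (f j)
    have hcompl : ∑ i ∈ sᶜ, symmetrizedMap (Function.update g i (g i * f j)) =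
        (sᶜ.card : ℂ) • symmetrizedMap f := by
      rw [Finset.sum_congr rfl (g := fun _ => symmetrizedMap f), Finset.sum_const,
        Nat.cast_smul_eq_nsmul]
      intro i hi
      have hi' := hgs i (Finset.mem_compl.mp hi)
      rw [hi', one_mul, symmetrizedMap_update_eq hi' (hgs j hj), ← hfg]
    rw [← Finset.sum_add_sum_compl s, hcompl, ← sub_eq_iff_eq_add'] at key
    have hcard : (sᶜ.card : ℂ) ≠ 0 :=
      Nat.cast_ne_zero.mpr (Finset.card_ne_zero_of_mem (Finset.mem_compl.mpr hj))
    rw [← inv_smul_smul₀ hcard (symmetrizedMap f), ← key]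
    refine Subalgebra.smul_mem _ (sub_mem (mul_mem (ih g hgs) (Algebra.subset_adjoin ⟨_, rfl⟩))
      (sum_mem fun i hi => ih _ fun k hk => ?_)) _
    rw [Function.update_of_ne (by rintro rfl; exact hk hi), hgs k hk]

theorem symmetrizedMap_mem_adjoin (f : Fin d → Module.End ℂ V) :
    symmetrizedMap f ∈ Algebra.adjoin ℂ {S | ∃ a : Module.End ℂ V, S = diagOp V d a} :=
  symmetrizedMap_mem_adjoin_of_support Finset.univ f fun i hi => absurd (Finset.mem_univ i) hi

theorem span_range_piTensorProduct_map [FiniteDimensional ℂ V] :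
    Submodule.span ℂ (Set.range fun f : Fin d → Module.End ℂ V => PiTensorProduct.map f) =
      ⊤ := by
  classical
  let b := Module.finBasis ℂ V
  let B := Basis.piTensorProduct (fun _ : Fin d => b)
  refine eq_top_iff.mpr fun T _ => ?_
  have hT : T = ∑ p, ∑ q, B.repr (T (B p)) q •
      PiTensorProduct.map (fun j => (b.coord (p j)).smulRight (b (q j))) := by
    refine B.ext fun r => ?_
    have hmap (p q : Fin d → Fin (Module.finrank ℂ V)) :
        PiTensorProduct.map (fun j => (b.coord (p j)).smulRight (b (q j))) (B r) =
          if r = p then B q else 0 := by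
      simp only [B, Basis.piTensorProduct_apply, PiTensorProduct.map_tprod,
        LinearMap.smulRight_apply, Module.Basis.coord_apply, Module.Basis.repr_self]
      rw [MultilinearMap.map_smul_univ]
      simp [Finsupp.single_apply, Fintype.prod_ite_zero, ← funext_iff]
    simp only [LinearMap.sum_apply, LinearMap.smul_apply, hmap, smul_ite, smul_zero]
    rw [Finset.sum_comm]
    simp [B.sum_repr]
  rw [hT]
  exact sum_mem fun p _ => sum_mem fun q _ =>
    Submodule.smul_mem _ _ (Submodule.subset_span ⟨_, rfl⟩)

theorem sum_permOp_conj_mem_adjoin [FiniteDimensional ℂ V]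
    (T : Module.End ℂ (⨂[ℂ] _ : Fin d, V)) :
    ∑ σ, permOp V d σ * T * permOp V d σ⁻¹ ∈
      Algebra.adjoin ℂ {S | ∃ a : Module.End ℂ V, S = diagOp V d a} := by
  have hT : T ∈ Submodule.span ℂ
      (Set.range fun f : Fin d → Module.End ℂ V => PiTensorProduct.map f) :=
    (span_range_piTensorProduct_map (V := V) (d := d)) ▸ Submodule.mem_top
  induction hT using Submodule.span_induction with
  | mem T h =>
    obtain ⟨f, rfl⟩ := h
    simp only [permOp_mul_map, mul_assoc, permOp_mul_permOp_inv, mul_one]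
    convert symmetrizedMap_mem_adjoin f using 1
    exact Fintype.sum_equiv (Equiv.inv _) _ _ fun _ => rfl
  | zero => simp
  | add S T _ _ hS hT =>
    simp only [mul_add, add_mul, Finset.sum_add_distrib]
    exact add_mem hS hT
  | smul c T _ hT =>
    simp only [mul_smul_comm, smul_mul_assoc, ← Finset.smul_sum]
    exact Subalgebra.smul_mem _ hT c

end

/-- Schur-Weyl duality, first half: the centralizer of the subalgebra `A` spanned by the
permutation operators of `S_d` on `V^{⊗d}` is the unital subalgebra `B` generated by the
diagonal operators `Σ_i a^{(i)}`, `a ∈ End(V)`. -/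
theorem schur_weyl_centralizer_of_symmetric_group
    (V : Type) [AddCommGroup V] [Module ℂ V] [FiniteDimensional ℂ V] (d : ℕ) :
    {T : Module.End ℂ (⨂[ℂ] _ : Fin d, V) |
        ∀ S ∈ Submodule.span ℂ {S | ∃ σ : Equiv.Perm (Fin d), S = permOp V d σ},
          T * S = S * T}
      = (Algebra.adjoin ℂ {S | ∃ a : Module.End ℂ V, S = diagOp V d a} : Set _) := by
  ext T
  simp only [Set.mem_ofPred_eq, SetLike.mem_coe]
  constructor
  · intro hT
    have hperm (σ : Equiv.Perm (Fin d)) : permOp V d σ * T * permOp V d σ⁻¹ = T := by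
      rw [← hT _ (Submodule.subset_span ⟨σ, rfl⟩), mul_assoc, permOp_mul_permOp_inv, mul_one]
    have hsum := sum_permOp_conj_mem_adjoin T
    simp only [hperm, Finset.sum_const, ← Nat.cast_smul_eq_nsmul ℂ] at hsum
    have hcard : ((Finset.univ : Finset (Equiv.Perm (Fin d))).card : ℂ) ≠ 0 :=
      Nat.cast_ne_zero.mpr (Finset.card_ne_zero_of_mem (Finset.mem_univ 1))
    rw [← inv_smul_smul₀ hcard T]
    exact Subalgebra.smul_mem _ hsum _
  · intro hT S hS
    have hle : Algebra.adjoin ℂ {S | ∃ a : Module.End ℂ V, S = diagOp V d a} ≤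
        Subalgebra.centralizer ℂ {S | ∃ σ : Equiv.Perm (Fin d), S = permOp V d σ} := by
      refine Algebra.adjoin_le ?_
      rintro _ ⟨a, rfl⟩ _ ⟨σ, rfl⟩
      exact permOp_mul_diagOp σ a
    induction hS using Submodule.span_induction with
    | mem S h => exact (hle hT S h).symm
    | zero => simp
    | add S S' _ _ hS hS' => rw [mul_add, add_mul, hS, hS']
    | smul c S _ hS => rw [mul_smul_comm, smul_mul_assoc, hS]
end
end

section
/- Let V be a finite-dimensional complex vector space and d a natural number. Then V^{⊗d} is a semisimple module over the unital subalgebra B of End_ℂ(V^{⊗d}) generated by the diagonal operators Σ_{i=1}^d a^{(i)} (a ∈ End_ℂ(V)); equivalently, every linear subspace of V^{⊗d} invariant under all the operators Σ_{i=1}^d a^{(i)} admits a complementary subspace invariant under all these operators (V^{⊗d} is a semisimple gl(V)-module under the diagonal action). -/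
open scoped TensorProduct

noncomputable section

/-- The matrix of a tensor product of operators is the product of the matrices. -/
lemma toMatrix_piTensorProduct_map {V ι : Type} [AddCommGroup V] [Module ℂ V] [Fintype ι]
    [DecidableEq ι] (b : Module.Basis ι ℂ V) {d : ℕ} (f : Fin d → Module.End ℂ V)
    (p q : Fin d → ι) :
    LinearMap.toMatrix (Basis.piTensorProduct fun _ : Fin d => b)
        (Basis.piTensorProduct fun _ : Fin d => b) (PiTensorProduct.map f) p q =
      ∏ i, LinearMap.toMatrix b b (f i) (p i) (q i) := by
  simp [LinearMap.toMatrix_apply, Basis.piTensorProduct_apply, PiTensorProduct.map_tprod,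
    Basis.piTensorProduct_repr_tprod_apply]

/-- In a tensor product basis, the diagonal operators of a matrix and of its conjugate transpose
are represented by conjugate transpose matrices. -/
lemma toMatrix_diagOp_conjTranspose {V ι : Type} [AddCommGroup V] [Module ℂ V] [Fintype ι]
    [DecidableEq ι] (b : Module.Basis ι ℂ V) (d : ℕ) (A : Matrix ι ι ℂ) :
    LinearMap.toMatrix (Basis.piTensorProduct fun _ : Fin d => b)
        (Basis.piTensorProduct fun _ : Fin d => b) (diagOp V d (Matrix.toLin b b A.conjTranspose)) =
      (LinearMap.toMatrix (Basis.piTensorProduct fun _ : Fin d => b)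
        (Basis.piTensorProduct fun _ : Fin d => b)
        (diagOp V d (Matrix.toLin b b A))).conjTranspose := by
  ext p q
  simp only [diagOp, slotOp, map_sum, Matrix.sum_apply, Matrix.conjTranspose_apply, star_sum,
    toMatrix_piTensorProduct_map, star_prod]
  refine Finset.sum_congr rfl fun i _ => Finset.prod_congr rfl fun j _ => ?_
  rcases eq_or_ne j i with rfl | h
  · simp
  · simp [Function.update_of_ne h, Matrix.one_apply, apply_ite, eq_comm]

/-- A family of operators on a finite-dimensional space whose set of matrices in some basis is
closed under conjugate transposition acts semisimply. -/
lemma exists_isCompl_invariant_of_conjTranspose {E κ α : Type*} [AddCommGroup E] [Module ℂ E]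
    [Fintype κ] [DecidableEq κ] (B : Module.Basis κ ℂ E) (T : α → Module.End ℂ E)
    (hT : ∀ a, ∃ a', LinearMap.toMatrix B B (T a') = (LinearMap.toMatrix B B (T a)).conjTranspose)
    (W : Submodule ℂ E) (hW : ∀ a, ∀ x ∈ W, T a x ∈ W) :
    ∃ W' : Submodule ℂ E, (∀ a, ∀ x ∈ W', T a x ∈ W') ∧ IsCompl W W' := by
  let e : E ≃ₗ[ℂ] EuclideanSpace ℂ κ := B.equivFun.trans (WithLp.linearEquiv 2 ℂ (κ → ℂ)).symm
  have he (f : Module.End ℂ E) (x : E) :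
      e (f x) = Matrix.toEuclideanLin (LinearMap.toMatrix B B f) (e x) := by
    ext k
    simpa [e] using (congrFun (LinearMap.toMatrix_mulVec_repr B B f x) k).symm
  let K := W.map e.toLinearMap
  refine ⟨Kᗮ.comap e.toLinearMap, fun a x hx => ?_, ?_⟩
  · obtain ⟨a', ha'⟩ := hT a
    simp only [Submodule.mem_comap, LinearEquiv.coe_coe, Submodule.mem_orthogonal] at hx ⊢
    rintro _ ⟨w, hw, rfl⟩
    have h := hx _ (Submodule.mem_map_of_mem (hW a' w hw))
    rw [LinearEquiv.coe_coe, he, ha', Matrix.toEuclideanLin_conjTranspose_eq_adjoint,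
      LinearMap.adjoint_inner_left] at h
    rwa [he]
  · have h := (Submodule.orderIsoMapComap e).symm.isCompl K.isCompl_orthogonal
    rwa [show (Submodule.orderIsoMapComap e).symm K = W from
      Submodule.comap_map_eq_of_injective e.injective W] at h

/-- `V^{⊗d}` is semisimple as a module over the algebra generated by the diagonal
`gl(V)`-action: every subspace invariant under all operators `Σ_i a^{(i)}` admits an invariant
complement. -/
theorem isSemisimple_tensorPower_glV
    (V : Type) [AddCommGroup V] [Module ℂ V] [FiniteDimensional ℂ V] (d : ℕ) :
    ∀ W : Submodule ℂ (⨂[ℂ] _ : Fin d, V),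
      (∀ a : Module.End ℂ V, ∀ x ∈ W, diagOp V d a x ∈ W) →
        ∃ W' : Submodule ℂ (⨂[ℂ] _ : Fin d, V),
          (∀ a : Module.End ℂ V, ∀ x ∈ W', diagOp V d a x ∈ W') ∧ IsCompl W W' := by
  intro W hW
  let b := Module.finBasis ℂ V
  refine exists_isCompl_invariant_of_conjTranspose (Basis.piTensorProduct fun _ : Fin d => b)
    (diagOp V d) (fun a => ⟨Matrix.toLin b b (LinearMap.toMatrix b b a).conjTranspose, ?_⟩) W hW
  rw [toMatrix_diagOp_conjTranspose, Matrix.toLin_toMatrix]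
end
end

section
/- If ν ∈ ℂ is not a nonnegative integer, then any two ν-equivalent partitions are equal; that is, every ∼ν-equivalence class of Young diagrams consists of exactly one diagram. -/
/-- A partition (Young diagram): a weakly decreasing function `λ : {1,2,…} → ℕ` with
`λ_i = 0` for all sufficiently large `i`. -/
structure NPartition where
  /-- the entries `λ_1 ≥ λ_2 ≥ ⋯` of the partition -/
  toFun : ℕ+ → ℕ
  antitone' : ∀ ⦃i j : ℕ+⦄, i ≤ j → toFun j ≤ toFun i
  eventually_zero' : ∃ N : ℕ+, ∀ i : ℕ+, N ≤ i → toFun i = 0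

/-- `|λ| = Σ_{i ≥ 1} λ_i`. -/
noncomputable def NPartition.size (l : NPartition) : ℕ := ∑ᶠ i : ℕ+, l.toFun i

/-- The sequence `μ_λ(ν)` with `μ_λ(ν)_0 = ν − |λ|` and `μ_λ(ν)_i = λ_i − i` for `i ≥ 1`. -/
noncomputable def muSeq (ν : ℂ) (l : NPartition) : ℕ → ℂ := fun i =>
  if h : i = 0 then ν - (l.size : ℂ)
  else (l.toFun ⟨i, Nat.pos_of_ne_zero h⟩ : ℂ) - (i : ℂ)

/-- `λ ∼ν λ'`: there is a bijection `f : ℕ → ℕ` with `μ_λ(ν)_i = μ_{λ'}(ν)_{f(i)}` for all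
`i ∈ ℕ`. -/
def nuEquiv (ν : ℂ) (l l' : NPartition) : Prop :=
  ∃ f : ℕ ≃ ℕ, ∀ i : ℕ, muSeq ν l i = muSeq ν l' (f i)

theorem NPartition.finite_support (l : NPartition) : (Function.support l.toFun).Finite := by
  obtain ⟨N, hN⟩ := l.eventually_zero'
  refine (Set.finite_Iio N).subset fun i hi => ?_
  by_contra hle
  exact hi (hN i (not_lt.mp hle))

theorem NPartition.toFun_eq_zero_of_size_lt (l : NPartition) (i : ℕ+) (hi : l.size < i) :
    l.toFun i = 0 := by
  by_contra hne
  have hle : ∑ j ∈ Finset.Icc 1 i, l.toFun j ≤ l.size := by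
    rw [NPartition.size, finsum_eq_sum_of_support_subset (s := l.finite_support.toFinset ∪
      Finset.Icc 1 i) l.toFun (by simp)]
    exact Finset.sum_le_sum_of_subset Finset.subset_union_right
  have hcard : (Finset.Icc 1 i).card • 1 ≤ ∑ j ∈ Finset.Icc 1 i, l.toFun j :=
    Finset.card_nsmul_le_sum _ _ _ fun j hj =>
      (Nat.one_le_iff_ne_zero.mpr hne).trans (l.antitone' (Finset.mem_Icc.mp hj).2)
  rw [PNat.card_Icc] at hcard
  simp at hcard
  omega

theorem muSeq_zero (ν : ℂ) (l : NPartition) : muSeq ν l 0 = ν - (l.size : ℂ) := by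
  simp [muSeq]

theorem muSeq_coe (ν : ℂ) (l : NPartition) (i : ℕ+) :
    muSeq ν l i = (((l.toFun i : ℤ) - (i : ℕ) : ℤ) : ℂ) := by
  simp only [muSeq, PNat.ne_zero, dif_neg, not_false_eq_true]
  push_cast
  rfl

/-- Away from the index `0`, the sequence `muSeq ν l` is strictly decreasing. -/
theorem lt_of_muSeq_eq {ν : ℂ} {l l' : NPartition} {i j a b : ℕ+} (hij : i < j)
    (hi : muSeq ν l i = muSeq ν l' a) (hj : muSeq ν l j = muSeq ν l' b) : a < b := by
  rw [muSeq_coe, muSeq_coe, Int.cast_inj] at hi hj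
  have hl := l.antitone' hij.le
  have hlt : (i : ℕ) < j := hij
  by_contra hle
  have hl' := l'.antitone' (not_lt.mp hle)
  have hba : (b : ℕ) ≤ a := not_lt.mp hle
  omega

theorem muSeq_coe_injective (ν : ℂ) (l : NPartition) :
    Function.Injective fun i : ℕ+ => muSeq ν l i := by
  intro i j hij
  rcases lt_trichotomy i j with h | h | h
  · exact absurd (lt_of_muSeq_eq h hij rfl) (lt_irrefl _)
  · exact h
  · exact absurd (lt_of_muSeq_eq h hij.symm rfl) (lt_irrefl _)

/-- If `ν` is an integer but not a natural number, then `ν - |λ|` also occurs in `muSeq ν l`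
at a positive index. -/
theorem exists_muSeq_eq_muSeq_zero {ν : ℂ} (hν : ∀ n : ℕ, ν ≠ (n : ℂ)) (l : NPartition)
    (z : ℤ) (hz : ν = z) : ∃ i : ℕ+, muSeq ν l i = muSeq ν l 0 := by
  have hneg : z < 0 := by
    by_contra hle
    obtain ⟨n, rfl⟩ := Int.eq_ofNat_of_zero_le (not_lt.mp hle)
    exact hν n (by simpa using hz)
  have hpos : 0 < l.size + z.natAbs := by omega
  obtain ⟨i, hi⟩ : ∃ i : ℕ+, (i : ℕ) = l.size + z.natAbs := ⟨⟨_, hpos⟩, rfl⟩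
  refine ⟨i, ?_⟩
  rw [muSeq_coe, muSeq_zero, hz, l.toFun_eq_zero_of_size_lt i (by omega), hi]
  have : ((0 : ℕ) : ℤ) - ((l.size + z.natAbs : ℕ) : ℤ) = z - (l.size : ℤ) := by omega
  rw [this]
  push_cast
  rfl

theorem muSeq_zero_eq_of_equiv {ν : ℂ} (hν : ∀ n : ℕ, ν ≠ (n : ℂ)) {l l' : NPartition}
    (f : ℕ ≃ ℕ) (hf : ∀ i, muSeq ν l i = muSeq ν l' (f i)) :
    muSeq ν l 0 = muSeq ν l' 0 := by
  rcases Nat.eq_zero_or_pos (f 0) with h0 | h0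
  · rw [hf 0, h0]
  have hmu := hf 0
  lift f 0 to ℕ+ using h0 with j hj
  obtain ⟨i, hi⟩ := exists_muSeq_eq_muSeq_zero hν l ((l'.toFun j : ℤ) - (j : ℕ) + l.size) (by
    rw [muSeq_zero, muSeq_coe] at hmu
    rw [Int.cast_add, ← hmu]
    simp)
  rcases Nat.eq_zero_or_pos (f i) with hfi | hfi
  · rw [← hi, hf, hfi]
  · have hmui := hf i
    have hne : f i ≠ f 0 := f.injective.ne i.ne_zero
    lift f i to ℕ+ using hfi with k hk
    have hkj : k = j := muSeq_coe_injective ν l' (hmui.symm.trans (hi.trans hmu))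
    exact absurd (by rw [← hj, hkj]) hne

theorem eq_of_equiv_map_zero {ν : ℂ} {l l' : NPartition} (g : ℕ ≃ ℕ) (hg0 : g 0 = 0)
    (hg : ∀ i, muSeq ν l i = muSeq ν l' (g i)) : l = l' := by
  have hpos : ∀ i : ℕ, 0 < i → 0 < g i := fun i hi =>
    Nat.pos_of_ne_zero fun h => hi.ne' (g.injective (h.trans hg0.symm))
  have hmono : StrictMono g := by
    intro i j hij
    rcases Nat.eq_zero_or_pos i with rfl | hi
    · rw [hg0]
      exact hpos j hij
    · exact lt_of_muSeq_eq (i := ⟨i, hi⟩) (j := ⟨j, hi.trans hij⟩) (a := ⟨g i, hpos i hi⟩)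
        (b := ⟨g j, hpos j (hi.trans hij)⟩) hij (hg i) (hg j)
  have hid : (g : ℕ → ℕ) = id :=
    (hmono.range_inj strictMono_id).mp (by rw [g.surjective.range_eq, Set.range_id])
  have hfun : l.toFun = l'.toFun := by
    funext i
    have hi := hg i
    rw [hid, id, muSeq_coe, muSeq_coe, Int.cast_inj] at hi
    omega
  cases l
  cases l'
  simpa using hfun

/-- If `ν` is not a nonnegative integer then every `∼ν`-equivalence class of Young diagrams is
trivial: any two `ν`-equivalent partitions are equal. -/
theorem nuEquiv_trivial_of_not_nat (ν : ℂ) (hν : ∀ n : ℕ, ν ≠ (n : ℂ))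
    (l l' : NPartition) (h : nuEquiv ν l l') : l = l' := by
  obtain ⟨f, hf⟩ := h
  have h0 := muSeq_zero_eq_of_equiv hν f hf
  refine eq_of_equiv_map_zero (ν := ν) (f.trans (Equiv.swap (f 0) 0)) (by simp) fun i => ?_
  rw [hf i, Equiv.trans_apply, Equiv.swap_apply_def]
  split_ifs with h1 h2
  · rw [h1, ← hf 0, h0]
  · rw [h2, ← h0, hf 0]
  · rfl
end

section
/- Let n ∈ ℕ and let λ be a partition with |λ| + λ_1 ≤ n. For j ≥ 1 define λ^{(j)} by λ^{(j)}_1 = n − |λ| + 1, λ^{(j)}_i = λ_{i−1} + 1 for 2 ≤ i ≤ j, and λ^{(j)}_i = λ_i for i > j; set λ^{(0)} = λ. Then each λ^{(j)} is a partition, λ^{(0)} ⊊ λ^{(1)} ⊊ λ^{(2)} ⊊ ⋯ (each λ^{(j)} is strictly contained in λ^{(j+1)}, meaning λ^{(j)}_i ≤ λ^{(j+1)}_i for all i with strict inequality for some i), and λ^{(j)} ∼n λ for every j ≥ 0. -/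
/-- The underlying function of the partition `λ^{(j)}`: for `j ≥ 1`,
`λ^{(j)}_1 = n − |λ| + 1`, `λ^{(j)}_i = λ_{i−1} + 1` for `2 ≤ i ≤ j`, and `λ^{(j)}_i = λ_i` for
`i > j`; and `λ^{(0)} = λ`. -/
noncomputable def chainFun (n : ℕ) (l : NPartition) (j : ℕ) : ℕ+ → ℕ := fun i =>
  if j = 0 then l.toFun i
  else if i = 1 then n - l.size + 1
  else if (i : ℕ) ≤ j then l.toFun (i - 1) + 1
  else l.toFun i

/-- Changing a partition at a single index changes its size accordingly. -/
theorem NPartition.size_add_apply_eq_of_eq_off (l l' : NPartition) (a : ℕ+)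
    (hoff : ∀ i, i ≠ a → l'.toFun i = l.toFun i) :
    l'.size + l.toFun a = l.size + l'.toFun a := by
  classical
  set s : Finset ℕ+ := insert a (l.finite_support.toFinset ∪ l'.finite_support.toFinset) with hs
  have ha : a ∈ s := Finset.mem_insert_self _ _
  have hl : l.size = ∑ i ∈ s, l.toFun i :=
    finsum_eq_sum_of_support_subset _ fun i hi => by
      simp only [hs, Finset.coe_insert, Finset.coe_union, Set.Finite.coe_toFinset]
      exact Or.inr (Or.inl hi)
  have hl' : l'.size = ∑ i ∈ s, l'.toFun i :=
    finsum_eq_sum_of_support_subset _ fun i hi => by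
      simp only [hs, Finset.coe_insert, Finset.coe_union, Set.Finite.coe_toFinset]
      exact Or.inr (Or.inr hi)
  have herase : ∑ i ∈ s.erase a, l'.toFun i = ∑ i ∈ s.erase a, l.toFun i :=
    Finset.sum_congr rfl fun i hi => hoff i (Finset.ne_of_mem_erase hi)
  rw [hl, hl', ← Finset.sum_erase_add s _ ha, ← Finset.sum_erase_add s l.toFun ha, herase]
  omega

theorem PNat.sub_one_coe {i : ℕ+} (hi : i ≠ 1) : ((i - 1 : ℕ+) : ℕ) = (i : ℕ) - 1 := by
  rw [PNat.sub_coe, if_pos (lt_of_le_of_ne one_le hi.symm), PNat.one_coe]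

theorem Nat.succPNat_ne_one {j : ℕ} (hj : 0 < j) : j.succPNat ≠ 1 := fun he => by
  have := congrArg PNat.val he
  simp at this
  omega

theorem PNat.succPNat_sub_one {j : ℕ} (hj : 0 < j) : j.succPNat - 1 = ⟨j, hj⟩ := by
  apply PNat.eq
  rw [PNat.sub_one_coe (Nat.succPNat_ne_one hj)]
  simp

theorem chainFun_antitone {n : ℕ} {l : NPartition} (h : l.size + l.toFun 1 ≤ n) (j : ℕ) :
    Antitone (chainFun n l j) := by
  intro i k hik
  have hik' : (i : ℕ) ≤ k := hik
  have hk1 := l.antitone' (one_le (a := k))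
  have hkp := l.antitone' (one_le (a := k - 1))
  have hlik := l.antitone' hik
  have hi0 := i.pos
  unfold chainFun
  by_cases hk : k = 1
  · obtain rfl : i = 1 := le_antisymm (hk ▸ hik) one_le
    rw [hk]
  by_cases hi : i = 1
  · simp only [hk, hi, if_true, if_false]
    split_ifs <;> omega
  have hi' := PNat.sub_one_coe hi
  have hk' := PNat.sub_one_coe hk
  have hp : l.toFun (k - 1) ≤ l.toFun (i - 1) :=
    l.antitone' (by rw [← PNat.coe_le_coe]; omega)
  have hq : l.toFun k ≤ l.toFun (i - 1) :=
    l.antitone' (by rw [← PNat.coe_le_coe]; omega)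
  simp only [hk, hi, if_false]
  split_ifs <;> omega

/-- The partition `λ^{(j)}`. -/
noncomputable def chainPartition {n : ℕ} {l : NPartition} (h : l.size + l.toFun 1 ≤ n) (j : ℕ) :
    NPartition where
  toFun := chainFun n l j
  antitone' _ _ hik := chainFun_antitone h j hik
  eventually_zero' := by
    obtain ⟨N, hN⟩ := l.eventually_zero'
    refine ⟨N + j.succPNat, fun i hi => ?_⟩
    have hi' : (N : ℕ) + (j + 1) ≤ i := by exact_mod_cast hi
    have hN0 := N.pos
    have hi1 : i ≠ 1 := by rintro rfl; simp at hi'; omega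
    have hij : ¬ (i : ℕ) ≤ j := by omega
    have hz : l.toFun i = 0 := hN i (by rw [← PNat.coe_le_coe]; omega)
    simp [chainFun, hi1, hij, hz]

theorem chainFun_zero (n : ℕ) (l : NPartition) : chainFun n l 0 = l.toFun := by
  funext i
  simp [chainFun]

/-- Consecutive members of the chain differ only in row `j + 1`. -/
theorem chainFun_succ_of_ne (n : ℕ) (l : NPartition) {j : ℕ} {i : ℕ+} (hi : i ≠ j.succPNat) :
    chainFun n l (j + 1) i = chainFun n l j i := by
  have hne : (i : ℕ) ≠ j + 1 := fun he => hi (PNat.eq (by simpa using he))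
  have hi0 := i.pos
  unfold chainFun
  by_cases hi1 : i = 1
  · have : j ≠ 0 := by rintro rfl; simp [hi1] at hne
    simp [hi1, this]
  · have hle : (i : ℕ) ≤ j + 1 ↔ (i : ℕ) ≤ j := by omega
    by_cases hj : j = 0
    · have : ¬ (i : ℕ) ≤ j := by omega
      simp [hi1, hle, this]
    · simp [hi1, hle, hj]

theorem chainFun_succPNat (n : ℕ) (l : NPartition) (j : ℕ) :
    chainFun n l j j.succPNat = l.toFun j.succPNat := by
  unfold chainFun
  by_cases hj : j = 0
  · simp [hj]
  · simp [hj, Nat.succPNat_ne_one (Nat.pos_of_ne_zero hj)]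

theorem chainFun_succ_succPNat (n : ℕ) (l : NPartition) {j : ℕ} (hj : 0 < j) :
    chainFun n l (j + 1) j.succPNat = l.toFun ⟨j, hj⟩ + 1 := by
  simp [chainFun, Nat.succPNat_ne_one hj, PNat.succPNat_sub_one hj]

theorem chainFun_one_one (n : ℕ) (l : NPartition) : chainFun n l 1 1 = n - l.size + 1 := by
  simp [chainFun]

theorem chainFun_lt_succ {n : ℕ} {l : NPartition} (h : l.size + l.toFun 1 ≤ n) (j : ℕ) :
    chainFun n l j j.succPNat < chainFun n l (j + 1) j.succPNat := by
  rw [chainFun_succPNat]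
  rcases Nat.eq_zero_or_pos j with rfl | hj
  · change l.toFun 1 < chainFun n l 1 1
    rw [chainFun_one_one]
    omega
  · rw [chainFun_succ_succPNat n l hj]
    exact Nat.lt_succ_of_le (l.antitone' (show j ≤ j + 1 from j.le_succ))

theorem chainPartition_size_succ {n : ℕ} {l : NPartition} (h : l.size + l.toFun 1 ≤ n) (j : ℕ) :
    (chainPartition h (j + 1)).size + l.toFun j.succPNat = n + (j + 1) := by
  induction j with
  | zero =>
    have hs := l.size_add_apply_eq_of_eq_off (chainPartition h 1) 1 fun i hi => by
      change chainFun n l (0 + 1) i = _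
      rw [chainFun_succ_of_ne n l (j := 0) hi, chainFun_zero]
    have hv : (chainPartition h 1).toFun 1 = n - l.size + 1 := chainFun_one_one n l
    change (chainPartition h 1).size + l.toFun 1 = _
    omega
  | succ j ih =>
    have hs := (chainPartition h (j + 1)).size_add_apply_eq_of_eq_off
      (chainPartition h (j + 1 + 1)) (j + 1).succPNat fun i hi => chainFun_succ_of_ne n l hi
    have hu : (chainPartition h (j + 1)).toFun (j + 1).succPNat = l.toFun (j + 1).succPNat :=
      chainFun_succPNat n l (j + 1)
    have hv : (chainPartition h (j + 1 + 1)).toFun (j + 1).succPNat = l.toFun j.succPNat + 1 :=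
      chainFun_succ_succPNat n l j.succ_pos
    omega

/-- The cycle `0 ↦ j`, `i ↦ i - 1` for `1 ≤ i ≤ j`, fixing every `i > j`. -/
def downCycle (j : ℕ) : ℕ ≃ ℕ where
  toFun i := if i = 0 then j else if i ≤ j then i - 1 else i
  invFun i := if i = j then 0 else if i < j then i + 1 else i
  left_inv i := by grind
  right_inv i := by grind

theorem chainPartition_nuEquiv {n : ℕ} {l : NPartition} (h : l.size + l.toFun 1 ≤ n) (j : ℕ) :
    nuEquiv (n : ℂ) (chainPartition h j) l := by
  rcases j with _ | j
  · have : chainPartition h 0 = l := by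
      cases l
      simp only [chainPartition, chainFun_zero]
    exact ⟨Equiv.refl ℕ, fun i => by rw [this]; rfl⟩
  refine ⟨downCycle (j + 1), fun i => ?_⟩
  rcases i with _ | i
  · have hs : ((chainPartition h (j + 1)).size : ℂ) + l.toFun j.succPNat = n + (j + 1) := by
      exact_mod_cast chainPartition_size_succ h j
    have hj : (⟨j + 1, j.succ_pos⟩ : ℕ+) = j.succPNat := rfl
    simp only [muSeq, downCycle, Equiv.coe_fn_mk, dif_pos, if_true, Nat.succ_ne_zero,
      dif_neg, not_false_eq_true, hj]
    push_cast
    linear_combination -hs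
  have hv : muSeq (n : ℂ) (chainPartition h (j + 1)) (i + 1)
      = (chainFun n l (j + 1) i.succPNat : ℂ) - ((i + 1 : ℕ) : ℂ) := rfl
  rw [hv]
  rcases i with _ | i
  · have h1 : chainFun n l (j + 1) (Nat.succPNat 0) = n - l.size + 1 := by
      change chainFun n l (j + 1) 1 = _
      simp [chainFun]
    have hle : l.size ≤ n := by omega
    rw [h1]
    simp [muSeq, downCycle, Nat.cast_sub hle]
  have hne : (i + 1).succPNat ≠ 1 := Nat.succPNat_ne_one i.succ_pos
  by_cases hij : i + 1 + 1 ≤ j + 1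
  · have h1 : chainFun n l (j + 1) (i + 1).succPNat = l.toFun i.succPNat + 1 := by
      have := PNat.succPNat_sub_one i.succ_pos
      have hij' : i + 1 ≤ j := by omega
      simp [chainFun, hne, hij', this]
      rfl
    have hf : downCycle (j + 1) (i + 1 + 1) = i + 1 := by simp [downCycle]; omega
    rw [h1, hf]
    change _ = (l.toFun i.succPNat : ℂ) - ((i + 1 : ℕ) : ℂ)
    push_cast
    ring
  · have h1 : chainFun n l (j + 1) (i + 1).succPNat = l.toFun (i + 1).succPNat := by
      have hij' : ¬ i + 1 ≤ j := by omega
      simp [chainFun, hne, hij']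
    have hf : downCycle (j + 1) (i + 1 + 1) = i + 1 + 1 := by simp [downCycle]; omega
    rw [h1, hf]
    rfl

/-- Structure of a nontrivial `∼n`-equivalence class: if `|λ| + λ_1 ≤ n` then each `λ^{(j)}` is
a partition, `λ^{(0)} ⊊ λ^{(1)} ⊊ λ^{(2)} ⊊ ⋯`, and `λ^{(j)} ∼n λ` for every `j ≥ 0`. -/
theorem chain_of_nontrivial_class (n : ℕ) (l : NPartition)
    (h : l.size + l.toFun 1 ≤ n) :
    ∃ Λ : ℕ → NPartition,
      (∀ j : ℕ, (Λ j).toFun = chainFun n l j) ∧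
      (∀ j : ℕ, (∀ i : ℕ+, (Λ j).toFun i ≤ (Λ (j + 1)).toFun i) ∧
        (∃ i : ℕ+, (Λ j).toFun i < (Λ (j + 1)).toFun i)) ∧
      (∀ j : ℕ, nuEquiv (n : ℂ) (Λ j) l) := by
  refine ⟨chainPartition h, fun _ => rfl, fun j => ⟨fun i => ?_, j.succPNat, chainFun_lt_succ h j⟩,
    chainPartition_nuEquiv h⟩
  by_cases hi : i = j.succPNat
  · exact hi ▸ (chainFun_lt_succ h j).le
  · exact (chainFun_succ_of_ne n l hi).ge
end

section
/- Let n ∈ ℕ and let λ be a partition with |λ| + λ_1 ≤ n. Let λ' be the partition with λ'_1 = n − |λ| + 1 and λ'_i = λ_i for i ≥ 2. Then for every partition μ: λ̃(n) ∈ I⁺_μ if and only if μ ∈ I⁺_λ and μ ∉ I⁺_{λ'}; that is, {μ : λ̃(n) ∈ I⁺_μ} = I⁺_λ \ I⁺_{λ'}. -/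
/-- `μ ∈ I⁺_λ`: `μ` is obtained from `λ` by adding boxes, no two in the same column, i.e.
`λ_i ≤ μ_i` and `μ_{i+1} ≤ λ_i` for all `i ≥ 1`. -/
def inIPlus (l m : NPartition) : Prop :=
  ∀ i : ℕ+, l.toFun i ≤ m.toFun i ∧ m.toFun (i + 1) ≤ l.toFun i

/-- The underlying function of the padded diagram `λ̃(n)`:
`λ̃(n)_1 = n − |λ|` and `λ̃(n)_{i+1} = λ_i` for `i ≥ 1`. -/
noncomputable def tildeFun (n : ℕ) (l : NPartition) : ℕ+ → ℕ := fun i =>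
  if i = 1 then n - l.size else l.toFun (i - 1)

/-- The underlying function of the diagram `λ'` with `λ'_1 = n − |λ| + 1` and `λ'_i = λ_i` for
`i ≥ 2`. -/
noncomputable def primeFun (n : ℕ) (l : NPartition) : ℕ+ → ℕ := fun i =>
  if i = 1 then n - l.size + 1 else l.toFun i

theorem tildeFun_one (n : ℕ) (l : NPartition) : tildeFun n l 1 = n - l.size := if_pos rfl

theorem tildeFun_add_one (n : ℕ) (l : NPartition) (i : ℕ+) :
    tildeFun n l (i + 1) = l.toFun i := by
  simp [tildeFun, PNat.add_sub, (PNat.lt_add_left 1 i).ne']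

/-- `λ̃(n) ∈ I⁺_μ` says that `μ ∈ I⁺_λ` and `μ_1 ≤ n − |λ|`. -/
theorem inIPlus_tilde_iff {n : ℕ} {l tl : NPartition} (htl : tl.toFun = tildeFun n l)
    (m : NPartition) :
    inIPlus m tl ↔ inIPlus l m ∧ m.toFun 1 ≤ n - l.size := by
  simp only [inIPlus, htl, tildeFun_add_one]
  constructor
  · intro hm
    refine ⟨fun i => ⟨(hm i).2, ?_⟩, tildeFun_one n l ▸ (hm 1).1⟩
    simpa only [tildeFun_add_one] using (hm (i + 1)).1
  · rintro ⟨hm, h1⟩ i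
    refine ⟨?_, (hm i).1⟩
    induction i using PNat.recOn with
    | one => rwa [tildeFun_one]
    | succ i _ => rw [tildeFun_add_one]; exact (hm i).2

/-- If `λ_1 ≤ n − |λ|` and `μ ∈ I⁺_λ`, then `μ ∈ I⁺_{λ'}` says that `μ_1 > n − |λ|`. -/
theorem inIPlus_prime_iff {n : ℕ} {l l' m : NPartition} (hl' : l'.toFun = primeFun n l)
    (h : l.toFun 1 ≤ n - l.size) (hm : inIPlus l m) :
    inIPlus l' m ↔ n - l.size < m.toFun 1 := by
  simp only [inIPlus, hl', primeFun]
  constructor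
  · intro hp
    simpa [Nat.succ_le_iff] using (hp 1).1
  · intro h1 i
    by_cases hi : i = 1
    · subst hi
      simpa using ⟨h1, (hm 1).2.trans (h.trans (Nat.le_succ _))⟩
    · simpa [hi] using hm i

/-- For `|λ| + λ_1 ≤ n` and `λ'` as above: `{μ : λ̃(n) ∈ I⁺_μ} = I⁺_λ \ I⁺_{λ'}`. -/
theorem tilde_mem_IPlus_iff_sdiff (n : ℕ) (l l' tl : NPartition)
    (h : l.size + l.toFun 1 ≤ n)
    (hl' : l'.toFun = primeFun n l) (htl : tl.toFun = tildeFun n l) :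
    ∀ m : NPartition, inIPlus m tl ↔ (inIPlus l m ∧ ¬ inIPlus l' m) := by
  intro m
  rw [inIPlus_tilde_iff htl, and_congr_right_iff]
  intro hm
  rw [inIPlus_prime_iff hl' (by omega) hm, not_lt]
end

section
/- Let U be a finite-dimensional complex vector space, V = ℂ ⊕ U with distinguished vector 𝟙 = (1,0), and n ∈ ℕ. Then there exists a ℂ-linear isomorphism Φ : V^{⊗n} → ⊕_{k=0}^{n} (U^{⊗k} ⊗ ℂ[Inj_k^n])^{S_k} which is equivariant for the S_n-actions on both sides and for the GL(U)-actions on both sides, and which sends 𝟙⊗𝟙⊗⋯⊗𝟙 to the canonical generator 1 of the summand (U^{⊗0} ⊗ ℂ[Inj_0^n])^{S_0} ≅ ℂ. -/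
open scoped TensorProduct DirectSum

noncomputable section

/-- The permutation action `P_τ` of `τ ∈ S_k` on `U^{⊗k}`:
`w₁ ⊗ ⋯ ⊗ w_k ↦ w_{τ⁻¹(1)} ⊗ ⋯ ⊗ w_{τ⁻¹(k)}`. -/
def permTP (U : Type) [AddCommGroup U] [Module ℂ U] (k : ℕ) (τ : Equiv.Perm (Fin k)) :
    (⨂[ℂ] _ : Fin k, U) →ₗ[ℂ] ⨂[ℂ] _ : Fin k, U :=
  (PiTensorProduct.reindex ℂ (fun _ : Fin k => U) τ).toLinearMap

/-- `ℂ[Inj_k^n]`: the free complex vector space on the set of injective maps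
`{1,…,k} → {1,…,n}`. -/
abbrev InjSp (k n : ℕ) : Type := (Fin k ↪ Fin n) →₀ ℂ

/-- The (diagonal) action of `τ ∈ S_k` on `U^{⊗k} ⊗ ℂ[Inj_k^n]`:
`τ · ((w₁⊗⋯⊗w_k) ⊗ f) = (w_{τ⁻¹(1)}⊗⋯⊗w_{τ⁻¹(k)}) ⊗ (f ∘ τ⁻¹)`. -/
def diagAct (U : Type) [AddCommGroup U] [Module ℂ U] (k n : ℕ) (τ : Equiv.Perm (Fin k)) :
    (⨂[ℂ] _ : Fin k, U) ⊗[ℂ] InjSp k n →ₗ[ℂ] (⨂[ℂ] _ : Fin k, U) ⊗[ℂ] InjSp k n :=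
  TensorProduct.map (permTP U k τ)
    (Finsupp.lmapDomain ℂ ℂ
      (fun f : Fin k ↪ Fin n => (τ⁻¹ : Equiv.Perm (Fin k)).toEmbedding.trans f))

/-- The subspace of `S_k`-invariants `(U^{⊗k} ⊗ ℂ[Inj_k^n])^{S_k}`. -/
def InvSp (U : Type) [AddCommGroup U] [Module ℂ U] (k n : ℕ) :
    Submodule ℂ ((⨂[ℂ] _ : Fin k, U) ⊗[ℂ] InjSp k n) :=
  ⨅ τ : Equiv.Perm (Fin k), LinearMap.eqLocus (diagAct U k n τ) LinearMap.id

/-- The action of `σ ∈ S_n` on `U^{⊗k} ⊗ ℂ[Inj_k^n]`: `w ⊗ f ↦ w ⊗ (σ ∘ f)`. -/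
def sActW (U : Type) [AddCommGroup U] [Module ℂ U] (k n : ℕ) (σ : Equiv.Perm (Fin n)) :
    (⨂[ℂ] _ : Fin k, U) ⊗[ℂ] InjSp k n →ₗ[ℂ] (⨂[ℂ] _ : Fin k, U) ⊗[ℂ] InjSp k n :=
  TensorProduct.map LinearMap.id
    (Finsupp.lmapDomain ℂ ℂ (fun f : Fin k ↪ Fin n => f.trans σ.toEmbedding))

/-- The diagonal action of `A ∈ End(U)` on `U^{⊗k} ⊗ ℂ[Inj_k^n]` (through `U^{⊗k}`). -/
def gActW (U : Type) [AddCommGroup U] [Module ℂ U] (k n : ℕ) (A : U →ₗ[ℂ] U) :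
    (⨂[ℂ] _ : Fin k, U) ⊗[ℂ] InjSp k n →ₗ[ℂ] (⨂[ℂ] _ : Fin k, U) ⊗[ℂ] InjSp k n :=
  TensorProduct.map (PiTensorProduct.map fun _ => A) LinearMap.id

/-- The diagonal action of `A ∈ End(U) ⊆ End(ℂ × U)` on `(ℂ × U)^{⊗n}` (acting as the
identity on the summand `ℂ`). -/
def gActV (U : Type) [AddCommGroup U] [Module ℂ U] (n : ℕ) (A : U →ₗ[ℂ] U) :
    (⨂[ℂ] _ : Fin n, (ℂ × U)) →ₗ[ℂ] ⨂[ℂ] _ : Fin n, (ℂ × U) :=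
  PiTensorProduct.map fun _ => (LinearMap.id : ℂ →ₗ[ℂ] ℂ).prodMap A

open Finset in
theorem exists_perm_trans_eq {k n : ℕ} {f g : Fin k ↪ Fin n}
    (h : univ.map g = univ.map f) :
    ∃ τ : Equiv.Perm (Fin k), τ.toEmbedding.trans f = g := by
  have hg : ∀ j, ∃ i, f i = g j := fun j => by
    have : g j ∈ univ.map f := h ▸ mem_map_of_mem g (mem_univ j)
    simpa using this
  choose t ht using hg
  have ht_inj : Function.Injective t := fun a b hab => g.injective (by rw [← ht, ← ht, hab])
  refine ⟨Equiv.ofBijective t (Finite.injective_iff_bijective.mp ht_inj), ?_⟩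
  ext j
  simp [ht]

open Finset in
/-- The embeddings with the same image as `f` are the reparametrizations of `f`. -/
theorem sum_embedding_of_forall_map_ne {M : Type*} [AddCommMonoid M] {k n : ℕ} (f : Fin k ↪ Fin n)
    (H : (Fin k ↪ Fin n) → M) (hH : ∀ g, univ.map g ≠ univ.map f → H g = 0) :
    ∑ g, H g = ∑ τ : Equiv.Perm (Fin k), H (τ.toEmbedding.trans f) := by
  classical
  have hinj : Function.Injective
      (fun τ : Equiv.Perm (Fin k) => τ.toEmbedding.trans f) := fun a b hab => by
    ext j : 1
    simpa using DFunLike.congr_fun hab j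
  rw [← sum_image (f := H) (s := univ)
    (g := fun τ : Equiv.Perm (Fin k) => τ.toEmbedding.trans f) hinj.injOn]
  refine (sum_subset (subset_univ _) fun g _ hg => hH g fun h => hg ?_).symm
  obtain ⟨τ, rfl⟩ := exists_perm_trans_eq h
  exact mem_image_of_mem _ (mem_univ τ)

open Finset in
theorem sum_embedding_map_univ {M : Type*} [AddCommMonoid M] {k n : ℕ}
    (G : Finset (Fin n) → M) :
    ∑ f : Fin k ↪ Fin n, G (univ.map f) = k.factorial • ∑ S ∈ powersetCard k univ, G S := by
  classical
  have hmaps : ∀ f ∈ (univ : Finset (Fin k ↪ Fin n)), univ.map f ∈ powersetCard k univ :=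
    fun f _ => by simp [mem_powersetCard]
  rw [← sum_fiberwise_of_maps_to hmaps, smul_sum]
  refine sum_congr rfl fun S hS => ?_
  obtain ⟨-, hS⟩ := mem_powersetCard.mp hS
  have hf : univ.map (S.orderEmbOfFin hS).toEmbedding = S := by
    ext i
    simp
  rw [sum_filter, sum_embedding_of_forall_map_ne (S.orderEmbOfFin hS).toEmbedding]
  · have (τ : Equiv.Perm (Fin k)) :
        univ.map (τ.toEmbedding.trans (S.orderEmbOfFin hS).toEmbedding) = S := by
      rw [← map_map, map_univ_equiv, hf]
    simp [this, Fintype.card_perm]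
  · intro g hg
    rw [hf] at hg
    simp [hg]

theorem update_extend_apply {α β γ : Type*} [DecidableEq α] [DecidableEq β] (f : α ↪ β)
    (w : α → γ) (e : β → γ) (j : α) (x : γ) :
    Function.extend f (Function.update w j x) e
      = Function.update (Function.extend f w e) (f j) x := by
  ext i
  by_cases hi : ∃ l, f l = i
  · obtain ⟨l, rfl⟩ := hi
    rcases eq_or_ne l j with rfl | h
    · simp [f.injective.extend_apply]
    · simp [f.injective.extend_apply, h]
  · rw [Function.extend_apply' _ _ _ hi, Function.update_of_ne fun h => hi ⟨j, h.symm⟩,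
      Function.extend_apply' _ _ _ hi]

section
variable {U : Type} [AddCommGroup U] {k n : ℕ}

/-- The family with `w j` at position `f j` and `𝟙` at all other positions. -/
def insertOnes (f : Fin k ↪ Fin n) (w : Fin k → U) : Fin n → ℂ × U :=
  Function.extend f (fun j => (0, w j)) fun _ => (1, 0)

theorem insertOnes_apply (f : Fin k ↪ Fin n) (w : Fin k → U) (j : Fin k) :
    insertOnes f w (f j) = (0, w j) :=
  f.injective.extend_apply _ _ _

theorem insertOnes_apply_of_not_exists (f : Fin k ↪ Fin n) (w : Fin k → U) {i : Fin n}
    (hi : ¬∃ j, f j = i) : insertOnes f w i = (1, 0) :=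
  Function.extend_apply' _ _ _ hi

theorem insertOnes_update (f : Fin k ↪ Fin n) (w : Fin k → U) (j : Fin k) (x : U) :
    insertOnes f (Function.update w j x) = Function.update (insertOnes f w) (f j) (0, x) := by
  rw [insertOnes, insertOnes, ← update_extend_apply]
  congr 1
  ext l : 1
  rcases eq_or_ne l j with rfl | h
  · simp
  · simp [h]

end

section
variable {U : Type} {k n : ℕ}

open Finset in
theorem prod_fst_update_apply (f : Fin k ↪ Fin n) (v : Fin n → ℂ × U) (j : Fin k) (z : ℂ × U) :
    ∏ i ∈ (univ.map f)ᶜ, (Function.update v (f j) z i).1 = ∏ i ∈ (univ.map f)ᶜ, (v i).1 :=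
  prod_congr rfl fun i hi => by
    rw [Function.update_of_ne]
    rintro rfl
    simp at hi

theorem snd_update_apply (f : Fin k ↪ Fin n) (v : Fin n → ℂ × U) (j : Fin k) (z : ℂ × U) :
    (fun l => (Function.update v (f j) z (f l)).2)
      = Function.update (fun l => (v (f l)).2) j z.2 := by
  ext l
  rcases eq_or_ne l j with rfl | h
  · simp
  · simp [h]

open Finset in
theorem prod_fst_update_of_not_exists (f : Fin k ↪ Fin n) (v : Fin n → ℂ × U) {i : Fin n}
    (hi : ¬∃ j, f j = i) (z : ℂ × U) :
    ∏ l ∈ (univ.map f)ᶜ, (Function.update v i z l).1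
      = z.1 * ∏ l ∈ (univ.map f)ᶜ \ {i}, (v l).1 := by
  have hm : i ∈ (univ.map f)ᶜ := by simpa using hi
  rw [← prod_update_of_mem hm (fun l => (v l).1) z.1]
  refine prod_congr rfl fun l _ => ?_
  rcases eq_or_ne l i with rfl | h
  · simp
  · simp [h]

theorem snd_update_of_not_exists (f : Fin k ↪ Fin n) (v : Fin n → ℂ × U) {i : Fin n}
    (hi : ¬∃ j, f j = i) (z : ℂ × U) :
    (fun l => (Function.update v i z (f l)).2) = fun l => (v (f l)).2 := by
  ext l
  rw [Function.update_of_ne fun h => hi ⟨l, h⟩]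

end

section
variable {U : Type} [AddCommGroup U] [Module ℂ U] {k n : ℕ}

open Finset in
/-- The component of `v₁ ⊗ ⋯ ⊗ vₙ` at `f`: the `U`-parts at the positions `f 1, …, f k`, scaled by
the product of the scalar parts at the other positions. -/
def embComponent (f : Fin k ↪ Fin n) :
    MultilinearMap ℂ (fun _ : Fin n => ℂ × U) (⨂[ℂ] _ : Fin k, U) :=
  MultilinearMap.mk'
    (fun v => (∏ i ∈ (univ.map f)ᶜ, (v i).1) •
      PiTensorProduct.tprod ℂ (fun j => (v (f j)).2))
    (by
      intro v i x y
      by_cases hi : ∃ j, f j = i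
      · obtain ⟨j, rfl⟩ := hi
        simp only [prod_fst_update_apply, snd_update_apply, Prod.snd_add,
          MultilinearMap.map_update_add, smul_add]
      · simp only [prod_fst_update_of_not_exists f v hi, snd_update_of_not_exists f v hi,
          Prod.fst_add, add_mul, add_smul])
    (by
      intro v i c x
      by_cases hi : ∃ j, f j = i
      · obtain ⟨j, rfl⟩ := hi
        simp only [prod_fst_update_apply, snd_update_apply, Prod.smul_snd,
          MultilinearMap.map_update_smul]
        rw [smul_comm]
      · simp only [prod_fst_update_of_not_exists f v hi, snd_update_of_not_exists f v hi,
          Prod.smul_fst, smul_eq_mul, mul_assoc, mul_smul])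

open Finset in
theorem embComponent_apply (f : Fin k ↪ Fin n) (v : Fin n → ℂ × U) :
    embComponent f v = (∏ i ∈ (univ.map f)ᶜ, (v i).1) •
      PiTensorProduct.tprod ℂ (fun j => (v (f j)).2) := rfl

/-- The inclusion of the copy of `U^{⊗k}` in `(ℂ × U)^{⊗n}` supported on the image of `f`. -/
def embInclusion (f : Fin k ↪ Fin n) :
    MultilinearMap ℂ (fun _ : Fin k => U) (⨂[ℂ] _ : Fin n, (ℂ × U)) :=
  MultilinearMap.mk' (fun w => PiTensorProduct.tprod ℂ (insertOnes f w))
    (by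
      intro w j x y
      have : ((0 : ℂ), x + y) = (0, x) + (0, y) := by simp
      simp only [insertOnes_update, this, MultilinearMap.map_update_add])
    (by
      intro w j c x
      have : ((0 : ℂ), c • x) = c • (0, x) := by simp
      simp only [insertOnes_update, this, MultilinearMap.map_update_smul])

theorem embInclusion_apply (f : Fin k ↪ Fin n) (w : Fin k → U) :
    embInclusion f w = PiTensorProduct.tprod ℂ (insertOnes f w) := rfl

variable (U k n) in
/-- The `k`-th component of the decomposition. -/
def toComponent :
    (⨂[ℂ] _ : Fin n, (ℂ × U)) →ₗ[ℂ] (⨂[ℂ] _ : Fin k, U) ⊗[ℂ] InjSp k n :=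
  ∑ f : Fin k ↪ Fin n, ((TensorProduct.mk ℂ _ (InjSp k n)).flip (Finsupp.single f 1)) ∘ₗ
    PiTensorProduct.lift (embComponent f)

theorem toComponent_tprod (v : Fin n → ℂ × U) :
    toComponent U k n (PiTensorProduct.tprod ℂ v)
      = ∑ f : Fin k ↪ Fin n, embComponent f v ⊗ₜ[ℂ] Finsupp.single f 1 := by
  simp [toComponent]

variable (U k n) in
/-- The inverse of the decomposition on the `k`-th component. -/
def ofComponent :
    (⨂[ℂ] _ : Fin k, U) ⊗[ℂ] InjSp k n →ₗ[ℂ] ⨂[ℂ] _ : Fin n, (ℂ × U) :=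
  (k.factorial : ℂ)⁻¹ • TensorProduct.lift
    (Finsupp.lift _ ℂ (Fin k ↪ Fin n) fun f => PiTensorProduct.lift (embInclusion f)).flip

theorem ofComponent_tmul_single (x : ⨂[ℂ] _ : Fin k, U) (f : Fin k ↪ Fin n) :
    ofComponent U k n (x ⊗ₜ[ℂ] Finsupp.single f 1)
      = (k.factorial : ℂ)⁻¹ • PiTensorProduct.lift (embInclusion f) x := by
  simp [ofComponent]

theorem tmul_single_hom_ext {M : Type*} [AddCommGroup M] [Module ℂ M]
    {F G : (⨂[ℂ] _ : Fin k, U) ⊗[ℂ] InjSp k n →ₗ[ℂ] M}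
    (h : ∀ (w : Fin k → U) (f : Fin k ↪ Fin n),
      F (PiTensorProduct.tprod ℂ w ⊗ₜ[ℂ] Finsupp.single f 1)
        = G (PiTensorProduct.tprod ℂ w ⊗ₜ[ℂ] Finsupp.single f 1)) : F = G := by
  apply TensorProduct.ext
  apply PiTensorProduct.ext
  ext w f
  simpa using h w f

theorem permTP_tprod (W : Type) [AddCommGroup W] [Module ℂ W] (τ : Equiv.Perm (Fin k))
    (w : Fin k → W) :
    permTP W k τ (PiTensorProduct.tprod ℂ w) = PiTensorProduct.tprod ℂ fun j => w (τ⁻¹ j) := by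
  simp [permTP, PiTensorProduct.reindex_tprod]

theorem permTP_embComponent (τ : Equiv.Perm (Fin k)) (f : Fin k ↪ Fin n) (v : Fin n → ℂ × U) :
    permTP U k τ (embComponent f v) = embComponent ((τ⁻¹).toEmbedding.trans f) v := by
  rw [embComponent_apply, embComponent_apply, map_smul, permTP_tprod, ← Finset.map_map,
    Finset.map_univ_equiv]
  rfl

theorem toComponent_mem_invSp (x : ⨂[ℂ] _ : Fin n, (ℂ × U)) :
    toComponent U k n x ∈ InvSp U k n := by
  rw [InvSp, Submodule.mem_iInf]
  intro τ
  rw [LinearMap.mem_eqLocus]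
  have : diagAct U k n τ ∘ₗ toComponent U k n = toComponent U k n := by
    ext v
    simp only [LinearMap.compMultilinearMap_apply, LinearMap.comp_apply, toComponent_tprod,
      map_sum, diagAct, TensorProduct.map_tmul, permTP_embComponent, Finsupp.lmapDomain_apply,
      Finsupp.mapDomain_single]
    exact Fintype.sum_equiv (Equiv.embeddingCongr τ (Equiv.refl _)) _ _ fun f => rfl
  simpa using LinearMap.congr_fun this x

theorem embComponent_comp_perm (σ : Equiv.Perm (Fin n)) (f : Fin k ↪ Fin n)
    (v : Fin n → ℂ × U) :
    embComponent (f.trans σ.toEmbedding) (fun i => v (σ⁻¹ i)) = embComponent f v := by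
  classical
  rw [embComponent_apply, embComponent_apply]
  congr 1
  · refine (Finset.prod_equiv σ (fun i => ?_) fun i _ => ?_).symm
    · simp
    · simp
  · simp

theorem toComponent_permTP (σ : Equiv.Perm (Fin n)) (x : ⨂[ℂ] _ : Fin n, (ℂ × U)) :
    toComponent U k n (permTP (ℂ × U) n σ x) = sActW U k n σ (toComponent U k n x) := by
  have : toComponent U k n ∘ₗ permTP (ℂ × U) n σ = sActW U k n σ ∘ₗ toComponent U k n := by
    ext v
    simp only [LinearMap.compMultilinearMap_apply, LinearMap.comp_apply, toComponent_tprod,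
      permTP_tprod, map_sum, sActW, TensorProduct.map_tmul, Finsupp.lmapDomain_apply,
      Finsupp.mapDomain_single, LinearMap.id_apply]
    refine (Fintype.sum_equiv (Equiv.embeddingCongr (Equiv.refl _) σ) _ _ fun f => ?_).symm
    rw [← embComponent_comp_perm σ f v]
    rfl
  exact LinearMap.congr_fun this x

theorem toComponent_gActV (A : U →ₗ[ℂ] U) (x : ⨂[ℂ] _ : Fin n, (ℂ × U)) :
    toComponent U k n (gActV U n A x) = gActW U k n A (toComponent U k n x) := by
  have : toComponent U k n ∘ₗ gActV U n A = gActW U k n A ∘ₗ toComponent U k n := by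
    ext v
    simp [toComponent_tprod, gActV, gActW, embComponent_apply, PiTensorProduct.map_tprod]
  exact LinearMap.congr_fun this x

open Finset in
theorem embInclusion_embComponent (f : Fin k ↪ Fin n) (v : Fin n → ℂ × U) :
    PiTensorProduct.lift (embInclusion f) (embComponent f v)
      = PiTensorProduct.tprod ℂ
        ((univ.map f).piecewise (fun i => (0, (v i).2)) fun i => ((v i).1, 0)) := by
  classical
  rw [embComponent_apply, map_smul, PiTensorProduct.lift.tprod, embInclusion_apply,
    ← MultilinearMap.map_piecewise_smul]
  congr 1
  ext i : 1
  by_cases hi : ∃ j, f j = i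
  · obtain ⟨j, rfl⟩ := hi
    simp [insertOnes_apply]
  · have : i ∉ univ.map f := by simpa using hi
    simp [piecewise, this, insertOnes_apply_of_not_exists f _ hi]

open Finset in
theorem sum_ofComponent_toComponent (x : ⨂[ℂ] _ : Fin n, (ℂ × U)) :
    ∑ k : Fin (n + 1), ofComponent U k n (toComponent U k n x) = x := by
  classical
  have : ∑ k : Fin (n + 1), ofComponent U k n ∘ₗ toComponent U k n = LinearMap.id := by
    ext v
    let G : Finset (Fin n) → ⨂[ℂ] _ : Fin n, (ℂ × U) := fun S => PiTensorProduct.tprod ℂ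
      (S.piecewise (fun i => ((0 : ℂ), (v i).2)) fun i => ((v i).1, (0 : U)))
    have hk (k : ℕ) : ofComponent U k n (toComponent U k n (PiTensorProduct.tprod ℂ v))
        = ∑ S ∈ powersetCard k univ, G S := by
      simp only [toComponent_tprod, map_sum, ofComponent_tmul_single, embInclusion_embComponent]
      rw [← smul_sum, sum_embedding_map_univ G, ← Nat.cast_smul_eq_nsmul ℂ, smul_smul,
        inv_mul_cancel₀ (Nat.cast_ne_zero.mpr k.factorial_ne_zero), one_smul]
    simp only [LinearMap.compMultilinearMap_apply, LinearMap.sum_apply, LinearMap.comp_apply, hk,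
      LinearMap.id_apply]
    rw [Fin.sum_univ_eq_sum_range (fun k => ∑ S ∈ powersetCard k univ, G S) (n + 1)]
    have hs := sum_powerset (univ : Finset (Fin n)) G
    rw [card_univ, Fintype.card_fin] at hs
    rw [← hs, powerset_univ, ← MultilinearMap.map_add_univ]
    congr 1
    ext i <;> simp
  simpa using LinearMap.congr_fun this x

open Finset in
theorem embComponent_insertOnes_eq_zero {l : ℕ} (f : Fin k ↪ Fin n) (g : Fin l ↪ Fin n)
    (h : univ.map g ≠ univ.map f) (w : Fin k → U) : embComponent g (insertOnes f w) = 0 := by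
  classical
  rw [embComponent_apply]
  by_cases hfg : univ.map f ⊆ univ.map g
  · obtain ⟨i, hi, hif⟩ := not_subset.mp fun hgf => h (hgf.antisymm hfg)
    obtain ⟨j, -, rfl⟩ := mem_map.mp hi
    rw [MultilinearMap.map_coord_zero _ j, smul_zero]
    rw [insertOnes_apply_of_not_exists]
    simpa using hif
  · obtain ⟨i, hi, hig⟩ := not_subset.mp hfg
    obtain ⟨j, -, rfl⟩ := mem_map.mp hi
    rw [prod_eq_zero (mem_compl.mpr hig), zero_smul]
    rw [insertOnes_apply]

open Finset in
theorem toComponent_ofComponent_of_ne {l : ℕ} (h : l ≠ k)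
    (x : (⨂[ℂ] _ : Fin k, U) ⊗[ℂ] InjSp k n) :
    toComponent U l n (ofComponent U k n x) = 0 := by
  have : toComponent U l n ∘ₗ ofComponent U k n = 0 := by
    refine tmul_single_hom_ext fun w f => ?_
    rw [LinearMap.comp_apply, ofComponent_tmul_single, map_smul, PiTensorProduct.lift.tprod,
      embInclusion_apply, toComponent_tprod, sum_eq_zero, smul_zero, LinearMap.zero_apply]
    intro g _
    rw [embComponent_insertOnes_eq_zero f g, TensorProduct.zero_tmul]
    intro hgf
    simpa [h] using congrArg card hgf
  exact LinearMap.congr_fun this x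

open Finset in
theorem embComponent_insertOnes_perm (f : Fin k ↪ Fin n) (τ : Equiv.Perm (Fin k))
    (w : Fin k → U) :
    embComponent (τ.toEmbedding.trans f) (insertOnes f w)
      = PiTensorProduct.tprod ℂ fun j => w (τ j) := by
  rw [embComponent_apply, prod_eq_one, one_smul]
  · simp [insertOnes_apply]
  · intro i hi
    rw [← map_map, map_univ_equiv] at hi
    rw [insertOnes_apply_of_not_exists]
    simpa using hi

theorem toComponent_ofComponent (x : (⨂[ℂ] _ : Fin k, U) ⊗[ℂ] InjSp k n) :
    toComponent U k n (ofComponent U k n x)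
      = (k.factorial : ℂ)⁻¹ • ∑ τ : Equiv.Perm (Fin k), diagAct U k n τ x := by
  have : toComponent U k n ∘ₗ ofComponent U k n
      = (k.factorial : ℂ)⁻¹ • ∑ τ : Equiv.Perm (Fin k), diagAct U k n τ := by
    refine tmul_single_hom_ext fun w f => ?_
    rw [LinearMap.comp_apply, ofComponent_tmul_single, map_smul, PiTensorProduct.lift.tprod,
      embInclusion_apply, toComponent_tprod, LinearMap.smul_apply, LinearMap.sum_apply,
      sum_embedding_of_forall_map_ne f]
    · congr 1
      refine Fintype.sum_equiv (Equiv.inv _) _ _ fun τ => ?_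
      rw [embComponent_insertOnes_perm, diagAct, TensorProduct.map_tmul, permTP_tprod,
        Finsupp.lmapDomain_apply, Finsupp.mapDomain_single]
      simp
    · intro g hg
      rw [embComponent_insertOnes_eq_zero f g hg, TensorProduct.zero_tmul]
  simpa using LinearMap.congr_fun this x

theorem toComponent_ofComponent_of_mem {x : (⨂[ℂ] _ : Fin k, U) ⊗[ℂ] InjSp k n}
    (hx : x ∈ InvSp U k n) : toComponent U k n (ofComponent U k n x) = x := by
  have hτ (τ : Equiv.Perm (Fin k)) : diagAct U k n τ x = x :=
    (Submodule.mem_iInf _).mp hx τ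
  simp only [toComponent_ofComponent, hτ, Finset.sum_const, Finset.card_univ, Fintype.card_perm,
    Fintype.card_fin]
  rw [← Nat.cast_smul_eq_nsmul ℂ, smul_smul,
    inv_mul_cancel₀ (Nat.cast_ne_zero.mpr k.factorial_ne_zero), one_smul]

variable (U n) in
/-- The decomposition of `(ℂ × U)^{⊗n}`, as a product over `k`. -/
def tensorPowerEquivPi :
    (⨂[ℂ] _ : Fin n, (ℂ × U)) ≃ₗ[ℂ] Π k : Fin (n + 1), ↥(InvSp U (k : ℕ) n) :=
  LinearEquiv.ofLinearMap
    (LinearMap.pi fun k => (toComponent U k n).codRestrict _ toComponent_mem_invSp)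
    (∑ k : Fin (n + 1), ofComponent U k n ∘ₗ (InvSp U k n).subtype ∘ₗ LinearMap.proj k)
    (by
      refine LinearMap.ext fun y => funext fun l => Subtype.ext ?_
      rw [LinearMap.comp_apply, LinearMap.pi_apply, LinearMap.codRestrict_apply,
        LinearMap.sum_apply, map_sum, Finset.sum_eq_single l]
      · exact toComponent_ofComponent_of_mem (y l).2
      · intro k _ hk
        exact toComponent_ofComponent_of_ne (fun h => hk (Fin.ext h.symm)) _
      · simp)
    (by
      refine LinearMap.ext fun x => ?_
      simpa using sum_ofComponent_toComponent x)

theorem coe_tensorPowerEquivPi_apply (x : ⨂[ℂ] _ : Fin n, (ℂ × U)) (k : Fin (n + 1)) :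
    (tensorPowerEquivPi U n x k : (⨂[ℂ] _ : Fin (k : ℕ), U) ⊗[ℂ] InjSp (k : ℕ) n)
      = toComponent U k n x := rfl

theorem toComponent_zero_tprod_one :
    toComponent U 0 n (PiTensorProduct.tprod ℂ fun _ : Fin n => ((1 : ℂ), (0 : U)))
      = (PiTensorProduct.tprod ℂ (fun i : Fin 0 => i.elim0)) ⊗ₜ[ℂ]
          Finsupp.single (Function.Embedding.ofIsEmpty : Fin 0 ↪ Fin n) 1 := by
  rw [toComponent_tprod, Fintype.sum_unique, embComponent_apply, Finset.prod_const_one, one_smul]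
  congr 2
  · exact Subsingleton.elim _ _

theorem toComponent_tprod_one_of_ne_zero (hk : k ≠ 0) :
    toComponent U k n (PiTensorProduct.tprod ℂ fun _ : Fin n => ((1 : ℂ), (0 : U))) = 0 := by
  rw [toComponent_tprod]
  refine Finset.sum_eq_zero fun f _ => ?_
  rw [embComponent_apply, MultilinearMap.map_coord_zero _ ⟨0, Nat.pos_of_ne_zero hk⟩ rfl,
    smul_zero, TensorProduct.zero_tmul]

end

/-- For a split unital vector space `V = ℂ𝟙 ⊕ U` (realized as `V = ℂ × U`, `𝟙 = (1,0)`) there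
is a linear isomorphism `V^{⊗n} ≅ ⊕_{k=0}^{n} (U^{⊗k} ⊗ ℂ[Inj_k^n])^{S_k}` which is
equivariant for the `S_n`-actions and the `GL(U)`-actions on both sides, and sends
`𝟙 ⊗ ⋯ ⊗ 𝟙` to the canonical generator `1` of the summand `k = 0`. -/
theorem tensor_power_decomposition (U : Type) [AddCommGroup U] [Module ℂ U]
    [FiniteDimensional ℂ U] (n : ℕ) :
    ∃ Φ : (⨂[ℂ] _ : Fin n, (ℂ × U)) ≃ₗ[ℂ] ⨁ k : Fin (n + 1), ↥(InvSp U (k : ℕ) n),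
      (∀ (σ : Equiv.Perm (Fin n)) (x : ⨂[ℂ] _ : Fin n, (ℂ × U)) (k : Fin (n + 1)),
        ((Φ (permTP (ℂ × U) n σ x)) k : (⨂[ℂ] _ : Fin (k : ℕ), U) ⊗[ℂ] InjSp (k : ℕ) n)
          = sActW U (k : ℕ) n σ ((Φ x) k : _)) ∧
      (∀ (A : LinearMap.GeneralLinearGroup ℂ U) (x : ⨂[ℂ] _ : Fin n, (ℂ × U))
          (k : Fin (n + 1)),
        ((Φ (gActV U n A.val x)) k : (⨂[ℂ] _ : Fin (k : ℕ), U) ⊗[ℂ] InjSp (k : ℕ) n)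
          = gActW U (k : ℕ) n A.val ((Φ x) k : _)) ∧
      (((Φ (PiTensorProduct.tprod ℂ fun _ : Fin n => ((1 : ℂ), (0 : U))))
            ⟨0, n.succ_pos⟩ : (⨂[ℂ] _ : Fin 0, U) ⊗[ℂ] InjSp 0 n)
          = (PiTensorProduct.tprod ℂ (fun i : Fin 0 => i.elim0)) ⊗ₜ[ℂ]
              Finsupp.single (Function.Embedding.ofIsEmpty : Fin 0 ↪ Fin n) 1) ∧
      (∀ k : Fin (n + 1), k ≠ ⟨0, n.succ_pos⟩ →
        (Φ (PiTensorProduct.tprod ℂ fun _ : Fin n => ((1 : ℂ), (0 : U)))) k = 0) := by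
  refine ⟨tensorPowerEquivPi U n ≪≫ₗ
    (DirectSum.linearEquivFunOnFintype ℂ (Fin (n + 1)) fun k => ↥(InvSp U (k : ℕ) n)).symm,
    fun σ x k => toComponent_permTP σ x, fun A x k => toComponent_gActV A.val x,
    toComponent_zero_tprod_one, fun k hk => Subtype.ext ?_⟩
  exact toComponent_tprod_one_of_ne_zero fun h => hk (Fin.ext h)
end
end
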